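/- arXiv:2311.02388 — 3 statements merged into one kernel-verified Lean document; each statement's English description precedes it below -/
import Mathlib

section
/- For all natural numbers p ≤ q, the value f(p,q) is given by: f(p,q) = 1 if p = q; f(p,q) = F(p,q) if p < q < 2p − ⌊|p−2|/2⌋ (an inequality of integers); and f(p,q) = 2p if q ≥ 2p − ⌊|p−2|/2⌋ (as integers). -/
/-!
A play at `(p, q)` other than the terminating one splits it into `(a, b)` and `(c, d)` with
`a + c + 1 = p` and `b + d + 1 = q`. The closed form is `1` on the diagonal, and off it twice
`min (min p q) ⌊2(p + q - 1)/5⌋`, apart from the position `{1, 2}`, of value `2`.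

No split attains the value of the position. A value is odd exactly on the diagonal, so by parity
only two off-diagonal parts of an off-diagonal position need attention. The Nim-sum of their halves
is at most the sum, which is too small: for parts with sums `s` and `t`,
`2(s - 1)/5 + 2(t - 1)/5 = 2(s + t + 1)/5 - 6/5`. If both parts are `{1, 2}`, this estimate fails,
but the Nim-sum is `0`.

Every smaller nonzero value is attained. A diagonal part contributes `1`, and the halves along a
line parallel to the diagonal start at `0` and grow by steps of at most `1`, which gives all odd
values. The parts `(a, 0)` and `(0, 1)` contribute `0`, and the halves grow equally slowly along a
line `(i, q - 1)`, which gives the even values `2k` up to `k = ⌊2(p + q - 4)/5⌋`. One value is left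
over when `p + q ≡ 1 (mod 5)`; its half is odd, and an exceptional part `{1, 2}` supplies the last
bit.
-/

/-- `mex S` is the least natural number not belonging to `S`. -/
noncomputable def mex (S : Set ℕ) : ℕ := sInf {n : ℕ | n ∉ S}

/-- `h 0 = 0` and `h n = 1` for all `n ≥ 1`. -/
def h : ℕ → ℕ
  | 0 => 0
  | _ + 1 => 1

/-- The nimber of the Circular sprout game `CS₄(𝒫₄ : p,1,q,1)`, defined by strong
recursion: `f p q` is the mex of the set consisting of `h p ^^^ h q` together with all
values `f p' q' ^^^ f (p-1-p') (q-1-q')` for `0 ≤ p' ≤ p-1` and `0 ≤ q' ≤ q-1`. -/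
noncomputable def f (p q : ℕ) : ℕ :=
  mex ({h p ^^^ h q} ∪
    ⋃ (p' : ℕ) (_ : p' < p) (q' : ℕ) (_ : q' < q),
      {f p' q' ^^^ f (p - 1 - p') (q - 1 - q')})
termination_by p
decreasing_by
  · omega
  · omega

/-- `idx p q` is the unique element of `{1,2,3,4,5}` congruent to `p + q` modulo `5`. -/
def idx (p q : ℕ) : ℕ := if (p + q) % 5 = 0 then 5 else (p + q) % 5

/-- `F p q = (4/5)·(p + q − idx p q) + 2·⌊idx p q / 4⌋`. -/
def F (p q : ℕ) : ℕ := 4 * ((p + q - idx p q) / 5) + 2 * (idx p q / 4)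

/-! ### Nim-sums, slowly growing sequences and mex -/

theorem two_mul_xor_two_mul (a b : ℕ) : 2 * a ^^^ 2 * b = 2 * (a ^^^ b) := by
  simpa only [Nat.shiftLeft_eq, pow_one, mul_comm] using
    (Nat.shiftLeft_xor_distrib (a := a) (b := b) (i := 1)).symm

theorem xor_le_add (a b : ℕ) : a ^^^ b ≤ a + b := by
  induction a using Nat.strong_induction_on generalizing b with
  | _ a ih =>
    rcases Nat.eq_zero_or_pos a with rfl | ha
    · simp
    · have hhalves : a / 2 ^^^ b / 2 ≤ a / 2 + b / 2 := ih (a / 2) (by omega) (b / 2)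
      have hdiv : (a ^^^ b) / 2 = a / 2 ^^^ b / 2 := Nat.xor_div_two
      have hmod : (a ^^^ b) % 2 = (a + b) % 2 := Nat.xor_mod_two_eq
      omega

theorem exists_eq_of_forall_succ_le_add_one {u : ℕ → ℕ} (hu : ∀ i, u (i + 1) ≤ u i + 1)
    {n k : ℕ} (hk₀ : u 0 ≤ k) (hk : k ≤ u n) : ∃ i ≤ n, u i = k := by
  induction n with
  | zero => exact ⟨0, le_rfl, le_antisymm hk₀ hk⟩
  | succ n ih =>
    rcases le_or_gt k (u n) with hkn | hkn
    · obtain ⟨i, hi, rfl⟩ := ih hkn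
      exact ⟨i, by omega, rfl⟩
    · exact ⟨n + 1, le_rfl, le_antisymm ((hu n).trans hkn) hk⟩

theorem mex_eq_of_forall_lt_mem {S : Set ℕ} {v : ℕ} (hv : v ∉ S) (hlt : ∀ k < v, k ∈ S) :
    mex S = v :=
  IsLeast.csInf_eq ⟨hv, fun _ hk => not_lt.mp fun hkv => hk (hlt _ hkv)⟩

/-! ### The mex recursion -/

/-- The nimbers reachable from `(p, q)` by splitting it into two positions valued by `g`. The parts
are written additively, so that the truncated subtractions in the definition of `f` disappear. -/
def splitOptions (g : ℕ → ℕ → ℕ) (p q : ℕ) : Set ℕ :=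
  {k | ∃ a b c d, a + c + 1 = p ∧ b + d + 1 = q ∧ g a b ^^^ g c d = k}

theorem splitOptions_congr {g g' : ℕ → ℕ → ℕ} {p : ℕ} (hg : ∀ a < p, ∀ b, g a b = g' a b) (q : ℕ) :
    splitOptions g p q = splitOptions g' p q := by
  ext k
  constructor <;> rintro ⟨a, b, c, d, hp, hq, rfl⟩ <;>
    exact ⟨a, b, c, d, hp, hq, by rw [hg a (by omega), hg c (by omega)]⟩

theorem splitOptions_subset_swap {g : ℕ → ℕ → ℕ} (hg : ∀ a b, g a b = g b a) (p q : ℕ) :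
    splitOptions g p q ⊆ splitOptions g q p := by
  rintro k ⟨a, b, c, d, hp, hq, rfl⟩
  exact ⟨b, a, d, c, hq, hp, by rw [hg b a, hg d c]⟩

theorem f_eq_mex (p q : ℕ) : f p q = mex (insert (h p ^^^ h q) (splitOptions f p q)) := by
  rw [f, Set.singleton_union]
  congr 2
  ext k
  simp only [Set.mem_iUnion, Set.mem_singleton_iff, exists_prop]
  constructor
  · rintro ⟨a, ha, b, hb, rfl⟩
    exact ⟨a, b, p - 1 - a, q - 1 - b, by omega, by omega, rfl⟩
  · rintro ⟨a, b, c, d, rfl, rfl, rfl⟩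
    exact ⟨a, by omega, b, by omega, by
      rw [show a + c + 1 - 1 - a = c by omega, show b + d + 1 - 1 - b = d by omega]⟩

theorem f_eq_of_mex_recursion {g : ℕ → ℕ → ℕ}
    (hg : ∀ p q, g p q = mex (insert (h p ^^^ h q) (splitOptions g p q))) (p q : ℕ) :
    f p q = g p q := by
  induction p using Nat.strong_induction_on generalizing q with
  | _ p ih => rw [f_eq_mex, hg, splitOptions_congr ih]

/-! ### The closed form -/

/-- The bound that the sum `s = p + q` imposes on half the nimber of an off-diagonal position
`(p, q)`: it is `⌊2(s - 1)/5⌋`, raised from `0` to `1` at `s = 3` because `f 1 2 = 2`. -/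
def sumBound (s : ℕ) : ℕ := if s = 3 then 1 else 2 * (s - 1) / 5

/-- Half the nimber of an off-diagonal position `(p, q)`. -/
def halfNimber (p q : ℕ) : ℕ := min (min p q) (sumBound (p + q))

/-- The closed form of `f`, for arguments in either order. -/
def closedForm (p q : ℕ) : ℕ := if p = q then 1 else 2 * halfNimber p q

theorem sumBound_mono : Monotone sumBound :=
  monotone_nat_of_le_succ fun s => by unfold sumBound; split_ifs <;> omega

theorem sumBound_add_two_le (s : ℕ) : sumBound (s + 2) ≤ sumBound s + 1 := by
  unfold sumBound
  split_ifs <;> omega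

theorem sumBound_add_lt {s t : ℕ} (hs : 0 < s) (ht : 0 < t) (hst : ¬(s = 3 ∧ t = 3)) :
    sumBound s + sumBound t < sumBound (s + t + 2) := by
  unfold sumBound
  split_ifs <;> omega

theorem exists_eq_of_sumBound_lt_of_lt {s k : ℕ} (hk : sumBound s < k)
    (hk' : k < sumBound (s + 3)) : ∃ m, s = 5 * m + 3 ∧ k = 2 * m + 1 := by
  unfold sumBound at hk hk'
  refine ⟨s / 5, ?_⟩
  split_ifs at hk hk' <;> omega

theorem sumBound_five_mul_add_one (m : ℕ) : sumBound (5 * m + 1) = 2 * m := by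
  unfold sumBound
  split_ifs <;> omega

theorem halfNimber_comm (p q : ℕ) : halfNimber p q = halfNimber q p := by
  rw [halfNimber, halfNimber, min_comm p q, add_comm p q]

@[simp]
theorem halfNimber_zero_left (q : ℕ) : halfNimber 0 q = 0 := by simp [halfNimber]

@[simp]
theorem halfNimber_zero_right (p : ℕ) : halfNimber p 0 = 0 := by simp [halfNimber]

theorem halfNimber_one_two : halfNimber 1 2 = 1 := rfl

theorem halfNimber_le_left (p q : ℕ) : halfNimber p q ≤ p :=
  (min_le_left _ _).trans (min_le_left _ _)

theorem halfNimber_le_sumBound (p q : ℕ) : halfNimber p q ≤ sumBound (p + q) := min_le_right _ _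

theorem le_halfNimber_iff {k p q : ℕ} :
    k ≤ halfNimber p q ↔ k ≤ p ∧ k ≤ q ∧ k ≤ sumBound (p + q) := by
  rw [halfNimber, le_min_iff, le_min_iff, and_assoc]

theorem halfNimber_succ_succ_le (p q : ℕ) : halfNimber (p + 1) (q + 1) ≤ halfNimber p q + 1 := by
  have hbound := sumBound_add_two_le (p + q)
  unfold halfNimber
  rw [show p + 1 + (q + 1) = p + q + 2 by omega]
  omega

theorem halfNimber_succ_left_le (p q : ℕ) : halfNimber (p + 1) q ≤ halfNimber p q + 1 := by
  have hbound := sumBound_add_two_le (p + q)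
  have hmono : sumBound (p + 1 + q) ≤ sumBound (p + q + 2) := sumBound_mono (by omega)
  unfold halfNimber
  omega

theorem closedForm_self (p : ℕ) : closedForm p p = 1 := if_pos rfl

theorem closedForm_of_ne {p q : ℕ} (hpq : p ≠ q) : closedForm p q = 2 * halfNimber p q :=
  if_neg hpq

theorem closedForm_comm (p q : ℕ) : closedForm p q = closedForm q p := by
  simp only [closedForm, halfNimber_comm p q, eq_comm]

theorem even_closedForm_iff {p q : ℕ} : Even (closedForm p q) ↔ p ≠ q := by
  rcases eq_or_ne p q with rfl | hpq
  · simp [closedForm_self]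
  · simp [closedForm_of_ne hpq, hpq]

/-! ### Splits valued by the closed form -/

theorem halfNimber_add_lt {a b c d : ℕ} (hab : a ≠ b) (hcd : c ≠ d)
    (hexc : ¬(a + b = 3 ∧ c + d = 3)) :
    halfNimber a b + halfNimber c d < halfNimber (a + c + 1) (b + d + 1) := by
  have hbound := sumBound_add_lt (s := a + b) (t := c + d) (by omega) (by omega) hexc
  unfold halfNimber
  rw [show a + c + 1 + (b + d + 1) = a + b + (c + d) + 2 by omega]
  omega

theorem halfNimber_xor_lt {a b c d : ℕ} (hab : a ≠ b) (hcd : c ≠ d) :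
    halfNimber a b ^^^ halfNimber c d < halfNimber (a + c + 1) (b + d + 1) := by
  by_cases hexc : a + b = 3 ∧ c + d = 3
  · obtain rfl : b = 3 - a := by omega
    obtain rfl : d = 3 - c := by omega
    have ha : a ≤ 3 := by omega
    have hc : c ≤ 3 := by omega
    interval_cases a <;> interval_cases c <;> decide
  · exact (xor_le_add _ _).trans_lt (halfNimber_add_lt hab hcd hexc)

theorem closedForm_notMem_splitOptions (p q : ℕ) :
    closedForm p q ∉ splitOptions closedForm p q := by
  rintro ⟨a, b, c, d, rfl, rfl, hval⟩
  have hparity : a + c + 1 ≠ b + d + 1 ↔ (a ≠ b ↔ c ≠ d) := by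
    rw [← even_closedForm_iff, ← hval, Nat.even_xor, even_closedForm_iff, even_closedForm_iff]
  obtain ⟨hab, hcd, hne⟩ : a ≠ b ∧ c ≠ d ∧ a + c + 1 ≠ b + d + 1 := by omega
  rw [closedForm_of_ne hab, closedForm_of_ne hcd, closedForm_of_ne hne, two_mul_xor_two_mul] at hval
  have hlt := halfNimber_xor_lt hab hcd
  omega

theorem two_mul_xor_mem_splitOptions {a b c d : ℕ} (hab : a ≠ b) (hcd : c ≠ d) :
    2 * (halfNimber a b ^^^ halfNimber c d) ∈ splitOptions closedForm (a + c + 1) (b + d + 1) :=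
  ⟨a, b, c, d, rfl, rfl, by
    rw [closedForm_of_ne hab, closedForm_of_ne hcd, two_mul_xor_two_mul]⟩

theorem two_mul_add_one_mem_splitOptions {p q k : ℕ} (hpq : p < q) (hk : k < halfNimber p q) :
    2 * k + 1 ∈ splitOptions closedForm p q := by
  obtain ⟨n, rfl⟩ := Nat.exists_eq_add_of_lt hpq
  obtain ⟨r, rfl⟩ : ∃ r, p = r + 1 :=
    Nat.exists_eq_add_one.mpr (hk.trans_le (halfNimber_le_left _ _)).pos
  have hstep (i : ℕ) : halfNimber (i + 1) (i + 1 + n + 1) ≤ halfNimber i (i + n + 1) + 1 := by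
    simpa only [add_right_comm] using halfNimber_succ_succ_le i (i + n + 1)
  obtain ⟨i, hi, rfl⟩ := exists_eq_of_forall_succ_le_add_one
    (u := fun i => halfNimber i (i + n + 1)) hstep (by simp)
    (Nat.lt_succ_iff.mp (hk.trans_le (hstep r)))
  refine ⟨i, i + n + 1, r - i, r - i, by omega, by omega, ?_⟩
  rw [closedForm_self, closedForm_of_ne (by omega), Nat.xor_one_of_even (even_two_mul _)]

theorem two_mul_mem_splitOptions_of_le_halfNimber {p q k : ℕ} (hpq : p < q)
    (hk : k ≤ halfNimber p q) : 2 * k ∈ splitOptions closedForm (p + 2) (q + 1) := by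
  obtain ⟨i, hi, rfl⟩ := exists_eq_of_forall_succ_le_add_one
    (u := fun i => halfNimber i q) (fun i => halfNimber_succ_left_le i q) (by simp) hk
  have hmem := two_mul_xor_mem_splitOptions (a := i) (b := q) (c := p + 1 - i) (d := 0)
    (by omega) (by omega)
  rwa [halfNimber_zero_right, Nat.xor_zero, show i + (p + 1 - i) + 1 = p + 2 by omega] at hmem

theorem two_mul_mem_splitOptions_of_le_sumBound {p q k : ℕ} (hpq : p ≤ q) (hkp : k < p)
    (hkq : k + 2 < q) (hk : k ≤ sumBound (p + q - 3)) : 2 * k ∈ splitOptions closedForm p q := by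
  rcases Nat.lt_or_ge (k + 1) p with hkp' | hkp'
  · obtain ⟨r, rfl⟩ : ∃ r, p = r + 2 := ⟨p - 2, by omega⟩
    obtain ⟨t, rfl⟩ : ∃ t, q = t + 1 := ⟨q - 1, by omega⟩
    refine two_mul_mem_splitOptions_of_le_halfNimber (by omega) (le_halfNimber_iff.mpr ?_)
    exact ⟨by omega, by omega, by rwa [show r + t = r + 2 + (t + 1) - 3 by omega]⟩
  · obtain rfl : p = k + 1 := by omega
    obtain ⟨t, rfl⟩ : ∃ t, q = t + 2 := ⟨q - 2, by omega⟩
    have hhalf : halfNimber k t = k := le_antisymm (halfNimber_le_left k t) <|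
      le_halfNimber_iff.mpr
        ⟨le_rfl, by omega, by rwa [show k + t = k + 1 + (t + 2) - 3 by omega]⟩
    have hmem := two_mul_xor_mem_splitOptions (a := k) (b := t) (c := 0) (d := 1)
      (by omega) (by omega)
    rwa [hhalf, halfNimber_zero_left, Nat.xor_zero] at hmem

theorem halfNimber_eq_two_mul {p q m : ℕ} (hsum : p + q = 5 * m + 1) (hp : 2 * m ≤ p)
    (hq : 2 * m ≤ q) : halfNimber p q = 2 * m := by
  rw [halfNimber, hsum, sumBound_five_mul_add_one]
  omega

theorem two_mul_mem_splitOptions_of_add_eq {p q m : ℕ} (hpq : p ≤ q) (hp : 2 * m + 1 < p)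
    (hsum : p + q = 5 * m + 6) : 2 * (2 * m + 1) ∈ splitOptions closedForm p q := by
  have hflip : 2 * m ^^^ 1 = 2 * m + 1 := Nat.xor_one_of_even (even_two_mul m)
  -- For `q = p + 1`, splitting off `(1, 2)` would leave a diagonal part.
  by_cases hadj : q = p + 1
  · obtain ⟨r, rfl⟩ : ∃ r, p = r + 3 := ⟨p - 3, by omega⟩
    obtain ⟨t, rfl⟩ : ∃ t, q = t + 2 := ⟨q - 2, by omega⟩
    have hmem := two_mul_xor_mem_splitOptions (a := r) (b := t) (c := 2) (d := 1)
      (by omega) (by omega)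
    rwa [halfNimber_eq_two_mul (m := m) (by omega) (by omega) (by omega), halfNimber_comm 2 1,
      halfNimber_one_two, hflip] at hmem
  · obtain ⟨r, rfl⟩ : ∃ r, p = r + 2 := ⟨p - 2, by omega⟩
    obtain ⟨t, rfl⟩ : ∃ t, q = t + 3 := ⟨q - 3, by omega⟩
    have hmem := two_mul_xor_mem_splitOptions (a := r) (b := t) (c := 1) (d := 2)
      (by omega) (by omega)
    rwa [halfNimber_eq_two_mul (m := m) (by omega) (by omega) (by omega),
      halfNimber_one_two, hflip] at hmem

theorem two_mul_mem_splitOptions {p q k : ℕ} (hpq : p < q) (hk₀ : 0 < k)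
    (hk : k < halfNimber p q) : 2 * k ∈ splitOptions closedForm p q := by
  have hkp : k < p := hk.trans_le (halfNimber_le_left p q)
  have hks : k < sumBound (p + q) := hk.trans_le (halfNimber_le_sumBound p q)
  have hkq : k + 2 < q := by
    unfold sumBound at hks
    split_ifs at hks <;> omega
  rcases le_or_gt k (sumBound (p + q - 3)) with hle | hgt
  · exact two_mul_mem_splitOptions_of_le_sumBound hpq.le hkp hkq hle
  · obtain ⟨m, hsum, rfl⟩ := exists_eq_of_sumBound_lt_of_lt hgt
      (by rwa [show p + q - 3 + 3 = p + q by omega])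
    exact two_mul_mem_splitOptions_of_add_eq hpq.le hkp (by omega)

theorem mem_splitOptions_of_lt_closedForm {p q k : ℕ} (hk₀ : 0 < k) (hk : k < closedForm p q) :
    k ∈ splitOptions closedForm p q := by
  wlog hpq : p < q generalizing p q
  · rcases eq_or_ne p q with rfl | hne
    · rw [closedForm_self] at hk
      omega
    · exact splitOptions_subset_swap closedForm_comm q p
        (this (closedForm_comm p q ▸ hk) (by omega))
  rw [closedForm_of_ne hpq.ne] at hk
  rcases Nat.even_or_odd' k with ⟨j, rfl | rfl⟩
  · exact two_mul_mem_splitOptions hpq (by omega) (by omega)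
  · exact two_mul_add_one_mem_splitOptions hpq (by omega)

theorem h_xor_h_eq_zero_iff {p q : ℕ} : h p ^^^ h q = 0 ↔ 0 < closedForm p q := by
  have hpos (p q : ℕ) : 0 < closedForm (p + 1) (q + 1) := by
    unfold closedForm halfNimber sumBound
    split_ifs <;> omega
  cases p <;> cases q
  · simp [h, closedForm_self]
  · simp [h, closedForm]
  · simp [h, closedForm]
  · simpa [h] using hpos _ _

theorem closedForm_eq_mex (p q : ℕ) :
    closedForm p q = mex (insert (h p ^^^ h q) (splitOptions closedForm p q)) := by
  have hterm := h_xor_h_eq_zero_iff (p := p) (q := q)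
  symm
  apply mex_eq_of_forall_lt_mem
  · rintro (heq | hmem)
    · omega
    · exact closedForm_notMem_splitOptions p q hmem
  · intro k hk
    rcases Nat.eq_zero_or_pos k with rfl | hk₀
    · exact Or.inl (hterm.mpr hk).symm
    · exact Or.inr (mem_splitOptions_of_lt_closedForm hk₀ hk)

theorem f_eq_closedForm (p q : ℕ) : f p q = closedForm p q :=
  f_eq_of_mex_recursion closedForm_eq_mex p q

theorem F_eq_two_mul_sumBound {p q : ℕ} (h₀ : p + q ≠ 0) (h₃ : p + q ≠ 3) :
    F p q = 2 * sumBound (p + q) := by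
  obtain ⟨m, r, hr, hsum⟩ : ∃ m r, r < 5 ∧ p + q = 5 * m + r + 1 :=
    ⟨(p + q - 1) / 5, (p + q - 1) % 5, by omega, by omega⟩
  have hidx : idx p q = r + 1 := by
    unfold idx
    split_ifs <;> omega
  rw [F, hidx, sumBound, if_neg h₃, hsum]
  interval_cases r <;> omega

theorem sumBound_lt_iff {p q : ℕ} (hpq : p < q) :
    sumBound (p + q) < p ↔ (q : ℤ) < 2 * (p : ℤ) - |(p : ℤ) - 2| / 2 := by
  rw [Int.abs_eq_natAbs, sumBound]
  split_ifs <;> omega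

theorem stmt0 (p q : ℕ) (hpq : p ≤ q) :
    f p q =
      if p = q then 1
      else if (q : ℤ) < 2 * (p : ℤ) - |(p : ℤ) - 2| / 2 then F p q
      else 2 * p := by
  rw [f_eq_closedForm]
  split_ifs with heq hlt
  · rw [heq, closedForm_self]
  · have hbound : sumBound (p + q) < p := (sumBound_lt_iff (by omega)).mpr hlt
    have hhalf : halfNimber p q = sumBound (p + q) := min_eq_right (by omega)
    have hsum : p + q ≠ 3 := by
      unfold sumBound at hbound
      split_ifs at hbound <;> omega
    rw [closedForm_of_ne heq, hhalf, F_eq_two_mul_sumBound (by omega) hsum]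
  · have hbound : p ≤ sumBound (p + q) := not_lt.mp (mt (sumBound_lt_iff (by omega)).mp hlt)
    have hhalf : halfNimber p q = p := by rw [halfNimber, min_eq_left hpq, min_eq_left hbound]
    rw [closedForm_of_ne heq, hhalf]
end

section
/- f(1,1) = 1, and f(1,q) = 2 for every natural number q ≥ 2. -/
theorem mex_eq_of_notMem_of_forall_lt_mem {S : Set ℕ} {n : ℕ} (hn : n ∉ S) (hlt : ∀ m < n, m ∈ S) :
    mex S = n :=
  IsLeast.csInf_eq ⟨hn, fun m hm => not_lt.1 fun hmn => hm (hlt m hmn)⟩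

theorem mex_Iio (n : ℕ) : mex (Set.Iio n) = n :=
  mex_eq_of_notMem_of_forall_lt_mem Set.self_notMem_Iio fun _ => id

theorem mex_eq_zero_of_notMem {S : Set ℕ} (hS : 0 ∉ S) : mex S = 0 :=
  mex_eq_of_notMem_of_forall_lt_mem hS fun _ hm => absurd hm (Nat.not_lt_zero _)

theorem h_of_ne_zero {n : ℕ} (hn : n ≠ 0) : h n = 1 := by
  obtain ⟨k, rfl⟩ := Nat.exists_eq_succ_of_ne_zero hn
  rfl

/-- The nimbers of the options of the position `(p, q)`, that is, the set whose `mex` is `f p q`. -/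
def optionNimbers (p q : ℕ) : Set ℕ :=
  {n | n = h p ^^^ h q ∨ ∃ p' < p, ∃ q' < q, n = f p' q' ^^^ f (p - 1 - p') (q - 1 - q')}

theorem f_eq_mex_optionNimbers (p q : ℕ) : f p q = mex (optionNimbers p q) := by
  rw [f]
  congr 1
  ext n
  simp [optionNimbers]

theorem optionNimbers_zero_left (q : ℕ) : optionNimbers 0 q = {h q} := by
  simp [optionNimbers, h]

theorem f_zero_zero : f 0 0 = 1 := by
  have options_eq : optionNimbers 0 0 = Set.Iio 1 := by
    simp [optionNimbers_zero_left, h]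
  rw [f_eq_mex_optionNimbers, options_eq, mex_Iio]

theorem f_zero_left_of_ne_zero {q : ℕ} (hq : q ≠ 0) : f 0 q = 0 := by
  rw [f_eq_mex_optionNimbers, optionNimbers_zero_left, h_of_ne_zero hq]
  exact mex_eq_zero_of_notMem (by simp)

theorem f_zero_left_lt_two (q : ℕ) : f 0 q < 2 := by
  rcases eq_or_ne q 0 with rfl | hq
  · simp [f_zero_zero]
  · simp [f_zero_left_of_ne_zero hq]

theorem mem_optionNimbers_one_left {q n : ℕ} (hq : q ≠ 0) :
    n ∈ optionNimbers 1 q ↔ n = 0 ∨ ∃ q' < q, n = f 0 q' ^^^ f 0 (q - 1 - q') := by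
  simp [optionNimbers, h_of_ne_zero hq, h_of_ne_zero one_ne_zero]

theorem optionNimbers_one_one : optionNimbers 1 1 = Set.Iio 1 := by
  ext n
  simp [mem_optionNimbers_one_left one_ne_zero]

theorem optionNimbers_one_left_of_two_le {q : ℕ} (hq : 2 ≤ q) :
    optionNimbers 1 q = Set.Iio 2 := by
  ext n
  rw [mem_optionNimbers_one_left (by lia), Set.mem_Iio]
  constructor
  · rintro (rfl | ⟨q', -, rfl⟩)
    · exact two_pos
    · exact Nat.xor_lt_two_pow (n := 1) (f_zero_left_lt_two _) (f_zero_left_lt_two _)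
  · intro hn
    obtain rfl | rfl : n = 0 ∨ n = 1 := by lia
    · exact Or.inl rfl
    · have one_eq : 1 = f 0 0 ^^^ f 0 (q - 1 - 0) := by
        rw [f_zero_zero, f_zero_left_of_ne_zero (by lia), Nat.xor_zero]
      exact Or.inr ⟨0, by lia, one_eq⟩

theorem stmt2 : f 1 1 = 1 ∧ ∀ q : ℕ, 2 ≤ q → f 1 q = 2 := by
  constructor
  · rw [f_eq_mex_optionNimbers, optionNimbers_one_one, mex_Iio]
  · intro q hq
    rw [f_eq_mex_optionNimbers, optionNimbers_one_left_of_two_le hq, mex_Iio]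
end

section
/- For all natural numbers p ≥ 3 and q ≥ 3, there exist natural numbers a, b, c, d with a + b = p − 2 and c + d = q − 2 such that f(a,c) ⊕ f(b,d) = 0; consequently mex({f(a,c) ⊕ f(b,d) : a + b = p − 2, c + d = q − 2}) ≥ 1, and therefore mex({mex({f(a,c) ⊕ f(b,d) : a + b = p − 2, c + d = q − 2})}) = 0. -/
/-- The second disjunct is the junk value `sInf ∅ = 0`. -/
theorem mex_eq_zero_iff {S : Set ℕ} : mex S = 0 ↔ 0 ∉ S ∨ S = Set.univ :=
  Nat.sInf_eq_zero.trans (or_congr_right Set.compl_empty_iff)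

theorem mex_pos_iff_of_finite {S : Set ℕ} (hS : S.Finite) : 0 < mex S ↔ 0 ∈ S := by
  have hne : S ≠ Set.univ := fun huniv => Set.infinite_univ (huniv ▸ hS)
  rw [Nat.pos_iff_ne_zero, ne_eq, mex_eq_zero_iff, or_iff_left hne, not_not]

theorem mex_singleton_eq_zero_iff {n : ℕ} : mex {n} = 0 ↔ n ≠ 0 := by
  rw [mex_eq_zero_iff, or_iff_left (Set.singleton_ne_univ n), Set.mem_singleton_iff, ne_comm]

theorem h_eq_zero_iff {n : ℕ} : h n = 0 ↔ n = 0 := by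
  cases n <;> simp [h]

theorem f_zero_left (q : ℕ) : f 0 q = mex {h q} := by
  rw [f]
  simp [h]

theorem f_zero_right (p : ℕ) : f p 0 = mex {h p} := by
  rw [f]
  simp [h]

theorem f_zero_left_eq_zero_iff {q : ℕ} : f 0 q = 0 ↔ q ≠ 0 := by
  rw [f_zero_left, mex_singleton_eq_zero_iff, h_eq_zero_iff.ne]

theorem f_zero_right_eq_zero_iff {p : ℕ} : f p 0 = 0 ↔ p ≠ 0 := by
  rw [f_zero_right, mex_singleton_eq_zero_iff, h_eq_zero_iff.ne]

/-- The nimbers of the sums `CS₄(𝒫₄ : a,1,c,1) + CS₄(𝒫₄ : b,1,d,1)` with `a + b = P` and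
`c + d = Q`. For `P = p - 2` and `Q = q - 2` these are the positions of `BS₂(𝒫₄ : p,q)` after
the second move. -/
def splitValues (P Q : ℕ) : Set ℕ :=
  {x : ℕ | ∃ a b c d : ℕ, a + b = P ∧ c + d = Q ∧ x = f a c ^^^ f b d}

theorem finite_splitValues (P Q : ℕ) : (splitValues P Q).Finite := by
  refine ((Set.finite_Iic P).image2 (fun a c => f a c ^^^ f (P - a) (Q - c))
    (Set.finite_Iic Q)).subset ?_
  rintro _ ⟨a, b, c, d, rfl, rfl, rfl⟩
  exact ⟨a, Nat.le_add_right a b, c, Nat.le_add_right c d, by simp only [Nat.add_sub_cancel_left]⟩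

theorem zero_mem_splitValues {P Q : ℕ} (hP : P ≠ 0) (hQ : Q ≠ 0) : 0 ∈ splitValues P Q := by
  refine ⟨0, P, Q, 0, zero_add P, add_zero Q, ?_⟩
  rw [f_zero_left_eq_zero_iff.mpr hQ, f_zero_right_eq_zero_iff.mpr hP, Nat.xor_self]

theorem stmt14 (p q : ℕ) (hp : 3 ≤ p) (hq : 3 ≤ q) :
    (∃ a b c d : ℕ, a + b = p - 2 ∧ c + d = q - 2 ∧ f a c ^^^ f b d = 0) ∧
    1 ≤ mex {x : ℕ | ∃ a b c d : ℕ,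
          a + b = p - 2 ∧ c + d = q - 2 ∧ x = f a c ^^^ f b d} ∧
    mex {mex {x : ℕ | ∃ a b c d : ℕ,
          a + b = p - 2 ∧ c + d = q - 2 ∧ x = f a c ^^^ f b d}} = 0 := by
  have zero_mem : 0 ∈ splitValues (p - 2) (q - 2) := zero_mem_splitValues (by omega) (by omega)
  have mex_pos : 0 < mex (splitValues (p - 2) (q - 2)) :=
    (mex_pos_iff_of_finite (finite_splitValues _ _)).mpr zero_mem
  refine ⟨?_, mex_pos, mex_singleton_eq_zero_iff.mpr mex_pos.ne'⟩
  obtain ⟨a, b, c, d, hab, hcd, hzero⟩ := zero_mem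
  exact ⟨a, b, c, d, hab, hcd, hzero.symm⟩
end
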